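/- arXiv:2604.02928 — 2 statements merged into one kernel-verified Lean document; each statement's English description precedes it below -/
import Mathlib

section
/- Online DMD rank-one update formula. Let X ∈ ℝ^{m×n} satisfy that X Xᵀ is invertible, let Y ∈ ℝ^{m×n}, and let x, y ∈ ℝ^m. Set P = (X Xᵀ)⁻¹, A = (Y Xᵀ) P, γ = 1/(1 + xᵀ P x), X₁ = [X, x] and Y₁ = [Y, y] (appending x, y as new last columns). Then X₁ X₁ᵀ = X Xᵀ + x xᵀ is invertible and (Y₁ X₁ᵀ)(X₁ X₁ᵀ)⁻¹ = A + γ (y − A x) xᵀ P. -/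
open Matrix

/-- Column vector as an `m × 1` matrix. -/
def colv {m : ℕ} (g : Fin m → ℝ) : Matrix (Fin m) (Fin 1) ℝ :=
  Matrix.of fun i _ => g i

/-!
Appending columns adds `x xᵀ` to `S = X Xᵀ` and `y xᵀ` to `Y Xᵀ = A S`. With `T = S + x xᵀ` this
gives `Y₁ X₁ᵀ = A S + y xᵀ = A T + (y - A x) xᵀ`. Since `xᵀ S⁻¹ T = (1 + xᵀ S⁻¹ x) xᵀ`, multiplying
by `T⁻¹` on the right turns the correction term into `γ (y - A x) xᵀ S⁻¹`. The scalar
`1 + xᵀ S⁻¹ x` is positive because `xᵀ S⁻¹ x` is the sum of the squares of the entries of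
`Xᵀ S⁻¹ x`.
-/

section RankOneUpdate

variable {R : Type*} [CommRing R] {m : Type*} [Fintype m] [DecidableEq m]
  {S : Matrix m m R} {γ : R} {u v : m → R}

theorem det_add_vecMulVec (hS : IsUnit S.det) (u v : m → R) :
    (S + vecMulVec u v).det = S.det * (1 + v ⬝ᵥ S⁻¹ *ᵥ u) := by
  have hfactor : S + vecMulVec u v = S * (1 + vecMulVec (S⁻¹ *ᵥ u) v) := by
    rw [Matrix.mul_add, Matrix.mul_one, mul_vecMulVec, mulVec_mulVec, mul_nonsing_inv S hS,
      one_mulVec]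
  rw [hfactor, det_mul, vecMulVec_eq Unit, det_one_add_replicateCol_mul_replicateRow]

theorem isUnit_det_add_vecMulVec (hS : IsUnit S.det) (hγ : γ * (1 + v ⬝ᵥ S⁻¹ *ᵥ u) = 1) :
    IsUnit (S + vecMulVec u v).det := by
  rw [det_add_vecMulVec hS]
  exact hS.mul (.of_mul_eq_one_right γ hγ)

theorem vecMul_inv_vecMul_add_vecMulVec (hS : IsUnit S.det) (u v : m → R) :
    v ᵥ* S⁻¹ ᵥ* (S + vecMulVec u v) = (1 + v ⬝ᵥ S⁻¹ *ᵥ u) • v := by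
  rw [vecMul_add, vecMul_vecMul, nonsing_inv_mul S hS, vecMul_one, vecMul_vecMulVec,
    ← dotProduct_mulVec, add_smul, one_smul]

theorem vecMul_inv_add_vecMulVec (hS : IsUnit S.det) (hγ : γ * (1 + v ⬝ᵥ S⁻¹ *ᵥ u) = 1) :
    v ᵥ* (S + vecMulVec u v)⁻¹ = γ • (v ᵥ* S⁻¹) := by
  have hT := isUnit_det_add_vecMulVec hS hγ
  set T := S + vecMulVec u v
  calc v ᵥ* T⁻¹ = (γ • (v ᵥ* S⁻¹)) ᵥ* T ᵥ* T⁻¹ := by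
        rw [smul_vecMul, vecMul_inv_vecMul_add_vecMulVec hS, smul_smul, hγ, one_smul]
    _ = γ • (v ᵥ* S⁻¹) := by rw [vecMul_vecMul, mul_nonsing_inv T hT, vecMul_one]

theorem add_vecMulVec_mul_inv_add_vecMulVec {l : Type*} (hS : IsUnit S.det)
    (hγ : γ * (1 + v ⬝ᵥ S⁻¹ *ᵥ u) = 1) (B : Matrix l m R) (w : l → R) :
    (B + vecMulVec w v) * (S + vecMulVec u v)⁻¹ =
      B * S⁻¹ + γ • vecMulVec (w - (B * S⁻¹) *ᵥ u) (v ᵥ* S⁻¹) := by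
  have hT := isUnit_det_add_vecMulVec hS hγ
  have hB : B + vecMulVec w v =
      B * S⁻¹ * (S + vecMulVec u v) + vecMulVec (w - (B * S⁻¹) *ᵥ u) v := by
    rw [Matrix.mul_add, nonsing_inv_mul_cancel_right _ _ hS, mul_vecMulVec, sub_vecMulVec]
    abel
  rw [hB, Matrix.add_mul, mul_nonsing_inv_cancel_right _ _ hT, vecMulVec_mul,
    vecMul_inv_add_vecMulVec hS hγ, vecMulVec_smul]

end RankOneUpdate

theorem fromCols_replicateCol_mul_transpose {R l m n ι : Type*} [Semiring R]
    [Fintype n] [Unique ι] (Y : Matrix l n R) (y : l → R) (X : Matrix m n R) (x : m → R) :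
    fromCols Y (replicateCol ι y) * (fromCols X (replicateCol ι x))ᵀ =
      Y * Xᵀ + vecMulVec y x := by
  rw [transpose_fromCols, transpose_replicateCol, fromCols_mul_fromRows, ← vecMulVec_eq]

theorem dotProduct_inv_mul_transpose_mulVec_nonneg {R m n : Type*} [CommRing R] [LinearOrder R]
    [IsOrderedRing R] [Fintype m] [DecidableEq m] [Fintype n] {X : Matrix m n R}
    (hX : IsUnit (X * Xᵀ).det) (x : m → R) :
    0 ≤ x ⬝ᵥ (X * Xᵀ)⁻¹ *ᵥ x := by
  set z := (X * Xᵀ)⁻¹ *ᵥ x with hz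
  have hx : X *ᵥ Xᵀ *ᵥ z = x := by
    rw [mulVec_mulVec, hz, mulVec_mulVec, mul_nonsing_inv _ hX, one_mulVec]
  calc 0 ≤ (Xᵀ *ᵥ z) ⬝ᵥ (Xᵀ *ᵥ z) := Finset.sum_nonneg fun _ _ ↦ mul_self_nonneg _
    _ = x ⬝ᵥ z := by rw [dotProduct_mulVec, vecMul_transpose, hx]

theorem stmt11_general {K l m n ι : Type*} [Field K] [LinearOrder K] [IsStrictOrderedRing K]
    [Fintype m] [DecidableEq m] [Fintype n] [Unique ι]
    (X : Matrix m n K) (hX : IsUnit (X * Xᵀ).det) (Y : Matrix l n K) (x : m → K) (y : l → K)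
    (P : Matrix m m K) (hP : P = (X * Xᵀ)⁻¹)
    (A : Matrix l m K) (hA : A = Y * Xᵀ * P)
    (γ : K) (hγ : γ = 1 / (1 + x ⬝ᵥ P *ᵥ x))
    (X₁ : Matrix m (n ⊕ ι) K) (hX₁ : X₁ = fromCols X (replicateCol ι x))
    (Y₁ : Matrix l (n ⊕ ι) K) (hY₁ : Y₁ = fromCols Y (replicateCol ι y)) :
    X₁ * X₁ᵀ = X * Xᵀ + vecMulVec x x ∧
    IsUnit (X₁ * X₁ᵀ).det ∧
    Y₁ * X₁ᵀ * (X₁ * X₁ᵀ)⁻¹ = A + γ • vecMulVec (y - A *ᵥ x) (x ᵥ* P) := by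
  subst hP hA hX₁ hY₁
  have hpos : 0 < 1 + x ⬝ᵥ (X * Xᵀ)⁻¹ *ᵥ x :=
    add_pos_of_pos_of_nonneg one_pos (dotProduct_inv_mul_transpose_mulVec_nonneg hX x)
  have hγ_mul : γ * (1 + x ⬝ᵥ (X * Xᵀ)⁻¹ *ᵥ x) = 1 := by rw [hγ, one_div_mul_cancel hpos.ne']
  simp only [fromCols_replicateCol_mul_transpose, true_and]
  exact ⟨isUnit_det_add_vecMulVec hX hγ_mul,
    add_vecMulVec_mul_inv_add_vecMulVec hX hγ_mul (Y * Xᵀ) y⟩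

/-- online DMD rank-one update formula.  With `P = (XXᵀ)⁻¹`,
`A = (YXᵀ)P`, `γ = 1/(1 + xᵀPx)`, and `X₁ = [X, x]`, `Y₁ = [Y, y]`, the matrix
`X₁X₁ᵀ = XXᵀ + xxᵀ` is invertible and
`(Y₁X₁ᵀ)(X₁X₁ᵀ)⁻¹ = A + γ(y − Ax)xᵀP`. -/
theorem stmt11 {m n : ℕ}
    (X Y : Matrix (Fin m) (Fin n) ℝ) (hX : IsUnit (X * Xᵀ).det)
    (x y : Fin m → ℝ)
    (P : Matrix (Fin m) (Fin m) ℝ) (hP : P = (X * Xᵀ)⁻¹)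
    (A : Matrix (Fin m) (Fin m) ℝ) (hA : A = Y * Xᵀ * P)
    (γ : ℝ) (hγ : γ = 1 / (1 + x ⬝ᵥ P.mulVec x))
    (X₁ : Matrix (Fin m) (Fin n ⊕ Fin 1) ℝ) (hX₁ : X₁ = Matrix.fromCols X (colv x))
    (Y₁ : Matrix (Fin m) (Fin n ⊕ Fin 1) ℝ) (hY₁ : Y₁ = Matrix.fromCols Y (colv y)) :
    X₁ * X₁ᵀ = X * Xᵀ + Matrix.vecMulVec x x ∧
    IsUnit (X₁ * X₁ᵀ).det ∧
    Y₁ * X₁ᵀ * (X₁ * X₁ᵀ)⁻¹ =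
      A + γ • Matrix.vecMulVec (y - A.mulVec x) (Matrix.vecMul x P) :=
  stmt11_general X hX Y x y P hP A hA γ hγ X₁ hX₁ Y₁ hY₁
end

section
/- One-basis Exact DMD eigenvector property. Let Q = [Q_x, q] ∈ ℝ^{m×r} have orthonormal columns, with Q_x its first r−1 columns. Let Ŝ_x ∈ ℝ^{(r−1)×n} have full row rank and S̃_y ∈ ℝ^{r×n}, and set M = S̃_y Ŝ_xᵀ(Ŝ_x Ŝ_xᵀ)⁻¹ ∈ ℝ^{r×(r−1)} and A_ex = Q M Q_xᵀ. If w ∈ ℝ^{r−1} and λ ∈ ℝ satisfy M' w = λ w, where M' ∈ ℝ^{(r−1)×(r−1)} consists of the first r−1 rows of M, then z = Q M w satisfies A_ex z = λ z; hence if z ≠ 0 it is an eigenvector of A_ex with eigenvalue λ. -/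
open Matrix

/-!
If `B A w = λ w`, then applying `A` gives `A B (A w) = λ A w`. For `A = Q M` and `B = Q_xᵀ`, the
product `A B` is `A_ex`, while orthonormality gives `Q_xᵀ Q = [1, 0]`, so that `B A` is the top
block `M'` of `M`.
-/

theorem mul_mulVec_mulVec_eq_smul {S α m n : Type*} [NonUnitalSemiring α] [Fintype m] [Fintype n]
    [DistribSMul S α] [SMulCommClass S α α] {A : Matrix m n α} {B : Matrix n m α} {w : n → α}
    {μ : S} (hw : (B * A) *ᵥ w = μ • w) :
    (A * B) *ᵥ (A *ᵥ w) = μ • A *ᵥ w :=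
  calc (A * B) *ᵥ (A *ᵥ w) = A *ᵥ ((B * A) *ᵥ w) := by
        simp only [mulVec_mulVec, Matrix.mul_assoc]
    _ = μ • A *ᵥ w := by rw [hw, mulVec_smul]

theorem hasEigenvector_mulVecLin_iff {R n : Type*} [CommRing R] [Fintype n] {A : Matrix n n R}
    {μ : R} {v : n → R} :
    Module.End.HasEigenvector A.mulVecLin μ v ↔ A *ᵥ v = μ • v ∧ v ≠ 0 := by
  rw [Module.End.hasEigenvector_iff, Module.End.mem_eigenspace_iff, mulVecLin_apply]

section Blocks

variable {R m n₁ n₂ : Type*} [Semiring R] [Fintype m] [DecidableEq n₁]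

theorem mul_fromCols_mul_eq_toRows₁ {n : Type*} [Fintype n₁] [Fintype n₂]
    {P : Matrix n₁ m R} {A : Matrix m n₁ R} {B : Matrix m n₂ R} (hA : P * A = 1) (hB : P * B = 0)
    (M : Matrix (n₁ ⊕ n₂) n R) :
    P * (fromCols A B * M) = M.toRows₁ :=
  calc P * (fromCols A B * M)
    _ = (fromCols 1 0 : Matrix n₁ (n₁ ⊕ n₂) R) * fromRows M.toRows₁ M.toRows₂ := by
        rw [← Matrix.mul_assoc, mul_fromCols, hA, hB, fromRows_toRows]
    _ = M.toRows₁ := by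
        rw [fromCols_mul_fromRows, Matrix.one_mul, Matrix.zero_mul, add_zero]

theorem transpose_fromCols_mul_fromCols_eq_one_iff [DecidableEq n₂]
    {A : Matrix m n₁ R} {B : Matrix m n₂ R} :
    (fromCols A B)ᵀ * fromCols A B = 1 ↔ Aᵀ * A = 1 ∧ Aᵀ * B = 0 ∧ Bᵀ * A = 0 ∧ Bᵀ * B = 1 := by
  rw [transpose_fromCols, fromRows_mul_fromCols, ← fromBlocks_one, fromBlocks_inj]

end Blocks

-- `P` plays the role of `Q_xᵀ`, and `Qc` that of the column `q`.
theorem stmt19_general {R m n₁ n₂ : Type*} [CommRing R] [Fintype m] [Fintype n₁] [Fintype n₂]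
    [DecidableEq n₁] {P : Matrix n₁ m R} {Qx : Matrix m n₁ R} {Qc : Matrix m n₂ R}
    (hQx : P * Qx = 1) (hQc : P * Qc = 0) {M : Matrix (n₁ ⊕ n₂) n₁ R} {w : n₁ → R} {μ : R}
    (hw : M.toRows₁ *ᵥ w = μ • w) :
    (fromCols Qx Qc * M * P) *ᵥ (fromCols Qx Qc *ᵥ (M *ᵥ w)) = μ • fromCols Qx Qc *ᵥ (M *ᵥ w) ∧
    (fromCols Qx Qc *ᵥ (M *ᵥ w) ≠ 0 →
      Module.End.HasEigenvector (fromCols Qx Qc * M * P).mulVecLin μ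
        (fromCols Qx Qc *ᵥ (M *ᵥ w))) := by
  have eigen_eq : (fromCols Qx Qc * M * P) *ᵥ (fromCols Qx Qc *ᵥ (M *ᵥ w)) =
      μ • fromCols Qx Qc *ᵥ (M *ᵥ w) := by
    rw [mulVec_mulVec w]
    apply mul_mulVec_mulVec_eq_smul
    rwa [mul_fromCols_mul_eq_toRows₁ hQx hQc]
  exact ⟨eigen_eq, fun z_ne_zero => hasEigenvector_mulVecLin_iff.mpr ⟨eigen_eq, z_ne_zero⟩⟩

/-- one-basis Exact DMD eigenvector property.  With
`Q = [Q_x, q]` having orthonormal columns, `Ŝ_x` of full row rank,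
`M = S̃_yŜ_xᵀ(Ŝ_xŜ_xᵀ)⁻¹` and `A_ex = Q M Q_xᵀ`, if `M' w = λ w` where `M'`
is the first `r−1` rows of `M`, then `z = Q M w` satisfies `A_ex z = λ z`;
hence if `z ≠ 0` it is an eigenvector of `A_ex` with eigenvalue `λ`. -/
theorem stmt19 {m r n : ℕ}
    (Qx : Matrix (Fin m) (Fin r) ℝ) (q : Fin m → ℝ)
    (Q : Matrix (Fin m) (Fin r ⊕ Fin 1) ℝ) (hQdef : Q = Matrix.fromCols Qx (colv q))
    (hQ : Qᵀ * Q = 1)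
    (Sx : Matrix (Fin r) (Fin n) ℝ) (hSx : IsUnit (Sx * Sxᵀ).det)
    (Sy : Matrix (Fin r ⊕ Fin 1) (Fin n) ℝ)
    (M : Matrix (Fin r ⊕ Fin 1) (Fin r) ℝ) (hM : M = Sy * Sxᵀ * (Sx * Sxᵀ)⁻¹)
    (Aex : Matrix (Fin m) (Fin m) ℝ) (hA : Aex = Q * M * Qxᵀ)
    (w : Fin r → ℝ) (lam : ℝ)
    (hw : (M.submatrix Sum.inl id).mulVec w = lam • w) :
    Aex.mulVec (Q.mulVec (M.mulVec w)) = lam • Q.mulVec (M.mulVec w) ∧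
    (Q.mulVec (M.mulVec w) ≠ 0 →
      Module.End.HasEigenvector (Matrix.mulVecLin Aex) lam (Q.mulVec (M.mulVec w))) := by
  subst hQdef hA
  obtain ⟨hQx, hq, -, -⟩ := transpose_fromCols_mul_fromCols_eq_one_iff.mp hQ
  exact stmt19_general hQx hq hw
end
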